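/- For every real α with 0 < α ≤ 2, the fractional centered-difference weights sum to zero: Σ_{k ∈ ℤ} w_k^α = 0, the series converging absolutely, where w_k^α = (−1)^k Γ(α+1) / (Γ(α/2 − k + 1) Γ(α/2 + k + 1)). -/

import Mathlib

open Real

/-- The fractional centered-difference weights
`w_k^α = (−1)^k Γ(α+1) / (Γ(α/2 − k + 1) Γ(α/2 + k + 1))`. -/
noncomputable def fracWeight (α : ℝ) (k : ℤ) : ℝ :=
  (-1 : ℝ) ^ k * Real.Gamma (α + 1) /
    (Real.Gamma (α / 2 - k + 1) * Real.Gamma (α / 2 + k + 1))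

lemma fw_aux (a : ℝ) (h0 : 0 < a) (h1 : a ≤ 1) (w : ℕ → ℝ) (hw0 : 0 < w 0)
    (hw : ∀ k : ℕ, w (k + 1) = w k * ((k - a) / (k + 1 + a))) :
    (∀ k, w (k + 1) ≤ 0) ∧ HasSum (fun n => w (n + 1)) (-(w 0 / 2)) := by
  have hneg : ∀ k, w (k + 1) ≤ 0 := by
    intro k
    induction k with
    | zero =>
      rw [hw]
      apply mul_nonpos_of_nonneg_of_nonpos hw0.le
      apply div_nonpos_of_nonpos_of_nonneg
      · simp [h0.le]
      · positivity
    | succ n ih =>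
      rw [hw]
      apply mul_nonpos_of_nonpos_of_nonneg ih
      apply div_nonneg
      · push_cast
        have : (0 : ℝ) ≤ n := Nat.cast_nonneg n
        linarith
      · positivity
  refine ⟨hneg, ?_⟩
  let T : ℕ → ℝ := fun k => w k * (a - k) / (2 * a)
  have hT : ∀ k, T (k + 1) = T k + w (k + 1) := by
    intro k
    have : (k : ℝ) + 1 + a ≠ 0 := by positivity
    simp only [T, hw]
    push_cast
    field_simp
    ring
  have hT0 : T 0 = w 0 / 2 := by
    simp only [T]
    push_cast
    field_simp
    ring
  have hTnn : ∀ k, 0 ≤ T k := by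
    intro k
    cases k with
    | zero => rw [hT0]; positivity
    | succ n =>
      apply div_nonneg _ (by positivity)
      apply mul_nonneg_of_nonpos_of_nonpos (hneg n)
      push_cast
      have : (0 : ℝ) ≤ n := Nat.cast_nonneg n
      linarith
  have hanti : Antitone T := antitone_nat_of_succ_le (fun n => by rw [hT]; linarith [hneg n])
  have hsum : ∀ n, ∑ i ∈ Finset.range n, (-w (i + 1)) = w 0 / 2 - T n := by
    intro n
    induction n with
    | zero => simp [hT0]
    | succ n ih => rw [Finset.sum_range_succ, ih, hT]; ring
  have hsummable : Summable (fun i => -w (i + 1)) :=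
    summable_of_sum_range_le (c := w 0 / 2) (fun n => by linarith [hneg n])
      (fun n => by rw [hsum]; linarith [hTnn n])
  have hlim : Filter.Tendsto T Filter.atTop (nhds (⨅ i, T i)) :=
    tendsto_atTop_ciInf hanti ⟨0, by rintro _ ⟨k, rfl⟩; exact hTnn k⟩
  have hL0 : 0 ≤ ⨅ i, T i := le_ciInf hTnn
  have hLle : ∀ k, ⨅ i, T i ≤ T k := fun k =>
    ciInf_le ⟨0, by rintro _ ⟨k, rfl⟩; exact hTnn k⟩ k
  generalize (⨅ i, T i) = L at *
  have hL : L = 0 := by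
    by_contra hne
    have hLpos : 0 < L := lt_of_le_of_ne hL0 (Ne.symm hne)
    have hc : Summable (fun n : ℕ => (2 * a * L) * (1 / ((n + 1 : ℕ) : ℝ))) := by
      refine Summable.of_nonneg_of_le (fun n => by positivity) (fun n => ?_) hsummable
      have h := hLle (n + 1)
      simp only [T] at h
      rw [le_div_iff₀ (by positivity)] at h
      rw [mul_one_div, div_le_iff₀ (by positivity)]
      have := mul_nonneg h0.le (neg_nonneg.2 (hneg n))
      nlinarith
    rw [summable_mul_left_iff (by positivity)] at hc
    exact Real.not_summable_one_div_natCast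
      ((summable_nat_add_iff (f := fun n : ℕ => 1 / (n : ℝ)) 1).1 hc)
  have hs : HasSum (fun i => -w (i + 1)) (w 0 / 2) := by
    rw [hasSum_iff_tendsto_nat_of_nonneg (fun n => by linarith [hneg n])]
    simp only [hsum]
    have := hlim.const_sub (w 0 / 2)
    simpa [hL] using this
  simpa using hs.neg

lemma fw_inv_Gamma (s : ℝ) : (Real.Gamma s)⁻¹ = s * (Real.Gamma (s + 1))⁻¹ := by
  rcases eq_or_ne s 0 with rfl | h
  · simp
  · rw [Real.Gamma_add_one h]
    field_simp

lemma fw_rec (α : ℝ) (h0 : 0 < α) (k : ℕ) :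
    fracWeight α ((k + 1 : ℕ) : ℤ) =
      fracWeight α (k : ℤ) * ((k - α / 2) / (k + 1 + α / 2)) := by
  have e1 := fw_inv_Gamma (α / 2 - k)
  have e2 := fw_inv_Gamma (α / 2 + k + 1)
  have hne : (k : ℝ) + 1 + α / 2 ≠ 0 := by positivity
  unfold fracWeight
  simp only [zpow_natCast, Int.cast_natCast, div_eq_mul_inv _ (Real.Gamma _ * Real.Gamma _),
    mul_inv]
  rw [e2]
  have h1 : α / 2 - ((k + 1 : ℕ) : ℝ) + 1 = α / 2 - k := by push_cast; ring
  have h2 : α / 2 + ((k + 1 : ℕ) : ℝ) + 1 = α / 2 + k + 1 + 1 := by push_cast; ring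
  rw [h1, h2, e1, pow_succ]
  generalize (Real.Gamma (α / 2 - k + 1))⁻¹ = x
  generalize (Real.Gamma (α / 2 + k + 1 + 1))⁻¹ = y
  field_simp
  ring

lemma fw_neg (α : ℝ) (k : ℤ) : fracWeight α (-k) = fracWeight α k := by
  unfold fracWeight
  have : (-1 : ℝ) ^ (-k) = (-1) ^ k := by rw [zpow_neg, ← inv_zpow]; norm_num
  rw [this]
  push_cast
  rw [sub_neg_eq_add, ← sub_eq_add_neg, mul_comm (Real.Gamma (α / 2 + k + 1))]

/-- For every real `α` with `0 < α ≤ 2`, the fractional centered-difference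
weights sum to zero: `Σ_{k ∈ ℤ} w_k^α = 0`, the series converging absolutely. -/
theorem fracWeight_sum_zero (α : ℝ) (hα0 : 0 < α) (hα2 : α ≤ 2) :
    Summable (fun k : ℤ => |fracWeight α k|) ∧ (∑' k : ℤ, fracWeight α k) = 0 := by
  obtain ⟨-, hs⟩ := fw_aux (α / 2) (by linarith) (by linarith)
    (fun k : ℕ => fracWeight α (k : ℤ))
    (by
      have h1 := Real.Gamma_pos_of_pos (s := α + 1) (by linarith)
      have h2 := Real.Gamma_pos_of_pos (s := α / 2 + 1) (by linarith)
      simp only [fracWeight]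
      norm_num
      positivity)
    (fw_rec α hα0)
  have hs1 := (hasSum_nat_add_iff (f := fun k : ℕ => fracWeight α (k : ℤ)) 1).1 hs
  have hs2 : HasSum (fun n : ℕ => fracWeight α (-((n : ℤ) + 1)))
      (-(fracWeight α ((0 : ℕ) : ℤ) / 2)) := by
    simp only [fw_neg]
    exact_mod_cast hs
  have h := HasSum.of_nat_of_neg_add_one hs1 hs2
  refine ⟨h.summable.abs, ?_⟩
  rw [h.tsum_eq]
  simp
  ring
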